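/- Upper bound in the paper's interference example: let g be a probability density on ℝ such that x ↦ (g ⋆ φ₂)(x)·log((g ⋆ φ₂)(x)) and x ↦ (g ⋆ φ₁)(x)·log((g ⋆ φ₁)(x)) are integrable. Then h(g ⋆ φ₂) − h(g ⋆ φ₁) ≤ (1/2)·log 2. (For the channel Ỹ = X̃ + Z̃ + Z with X̃ ~ N(0,1), Z ~ N(0,1) and Z̃ of density g, the mutual information I(X̃; Ỹ) = h(g ⋆ φ₂) − h(g ⋆ φ₁) is maximized, over all noise densities, by concentrating Z̃ at a point, giving the value h(φ₂) − h(φ₁) = (1/2)·log 2.) -/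

import Mathlib

/-!
The mutual information `I(X; X + Z + Z̃)` is at most `I(X; X + Z) = (1/2) log 2` because
`X + Z → X + Z + Z̃` is post-processing. The proof makes this data-processing inequality concrete.

Let `ν` be the probability measure with density `g`, and write `p_v = g ⋆ φ_v`, which is the mixture
`x ↦ ∫ φ_v (x - t) dν(t)`. For fixed `s, y`, the log-sum inequality (in the tangent-line form
`u log (u / v) ≥ u log r + u - r v` with `r = p₁(s) / p₂(y)`), applied under `∫ … dν(t)` to
`u = φ₁(s - t)` and `v = φ₂(y - t)`, gives `mix_log_sum`:
`p₁(s) (log p₁(s) - log p₂(y)) ≤ ∫ φ₁(s - t) log (φ₁(s - t) / φ₂(y - t)) dν(t)`.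
The logarithm on the right is a quadratic polynomial in `s - t` and `y - s`. Averaging over
`y - s ~ N(0, 1)` gives `mix_log_sum_averaged`, and integrating over `s` turns the right side
into `(1/2) log 2`. On the left, `φ₁ ⋆ φ₁ = φ₂` and Fubini (`integrable_cross`, `integral_cross`)
produce `∫ p₁ log p₁ - ∫ p₂ log p₂`.
-/

open MeasureTheory

/-- Convolution of two functions on ℝ (with respect to Lebesgue measure). -/
noncomputable def conv (p q : ℝ → ℝ) : ℝ → ℝ :=
  fun x => ∫ t : ℝ, p t * q (x - t)

/-- The centered Gaussian density of variance `v`. -/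
noncomputable def gaussianDensity (v : ℝ) (x : ℝ) : ℝ :=
  (Real.sqrt (2 * Real.pi * v))⁻¹ * Real.exp (-(x ^ 2) / (2 * v))

open ProbabilityTheory

/-! ### Gaussian densities -/

lemma gd_pos {v : ℝ} (hv : 0 < v) (x : ℝ) : 0 < gaussianDensity v x := by
  unfold gaussianDensity; positivity

lemma gd_cont (v : ℝ) : Continuous (gaussianDensity v) := by
  unfold gaussianDensity; fun_prop

lemma gd_eq_pdf (v : NNReal) (x : ℝ) : gaussianDensity v x = gaussianPDFReal 0 v x := by
  simp [gaussianDensity, gaussianPDFReal]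

lemma gd_one_eq_pdf (x : ℝ) : gaussianDensity 1 x = gaussianPDFReal 0 1 x := by
  simpa using gd_eq_pdf 1 x

lemma gd_bound {v : ℝ} (hv : 0 < v) (x : ℝ) :
    ‖gaussianDensity v x‖ ≤ (Real.sqrt (2 * Real.pi * v))⁻¹ := by
  rw [Real.norm_of_nonneg (gd_pos hv x).le]
  unfold gaussianDensity
  refine mul_le_of_le_one_right (by positivity) (Real.exp_le_one_iff.2 ?_)
  rw [neg_div]
  exact neg_nonpos.2 (by positivity)

lemma sq_mul_gd_bound (x : ℝ) :
    ‖x ^ 2 * gaussianDensity 1 x‖ ≤ 2 * (Real.sqrt (2 * Real.pi * 1))⁻¹ := by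
  rw [Real.norm_of_nonneg (mul_nonneg (sq_nonneg x) (gd_pos one_pos x).le)]
  unfold gaussianDensity
  have h : x ^ 2 * Real.exp (-(x ^ 2) / (2 * 1)) ≤ 2 := by
    have h1 : -(x ^ 2) / (2 * 1) = -(x ^ 2 / 2) := by ring
    rw [h1, Real.exp_neg, ← div_eq_mul_inv, div_le_iff₀ (Real.exp_pos _)]
    linarith [Real.add_one_le_exp (x ^ 2 / 2)]
  have hc : 0 ≤ (Real.sqrt (2 * Real.pi * 1))⁻¹ := by positivity
  nlinarith [mul_le_mul_of_nonneg_left h hc]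

lemma mul_gd_bound (x : ℝ) :
    ‖x * gaussianDensity 1 x‖ ≤ 3 * (Real.sqrt (2 * Real.pi * 1))⁻¹ := by
  have h1 := gd_bound one_pos x
  have h2 := sq_mul_gd_bound x
  have hp := gd_pos one_pos x
  rw [Real.norm_of_nonneg hp.le] at h1
  rw [Real.norm_of_nonneg (mul_nonneg (sq_nonneg x) hp.le)] at h2
  rw [norm_mul, Real.norm_of_nonneg hp.le, Real.norm_eq_abs]
  have h3 : |x| ≤ 1 + x ^ 2 := by
    rw [← sq_abs]; nlinarith [sq_nonneg (|x| - 1), abs_nonneg x]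
  nlinarith [mul_le_mul_of_nonneg_right h3 hp.le]

lemma integrable_of_gaussianReal {f : ℝ → ℝ} (hf : Integrable f (gaussianReal 0 1)) :
    Integrable (fun x => f x * gaussianDensity 1 x) := by
  rw [gaussianReal_of_var_ne_zero 0 one_ne_zero,
    integrable_withDensity_iff_integrable_smul' (measurable_gaussianPDF _ _)
      (Filter.Eventually.of_forall fun _ => gaussianPDF_lt_top)] at hf
  refine hf.congr (Filter.Eventually.of_forall fun x => ?_)
  simp [toReal_gaussianPDF, gd_one_eq_pdf, mul_comm]

lemma integral_mul_gd (f : ℝ → ℝ) :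
    ∫ x, f x * gaussianDensity 1 x = ∫ x, f x ∂(gaussianReal 0 1) := by
  rw [integral_gaussianReal_eq_integral_smul one_ne_zero]
  simp [gd_one_eq_pdf, mul_comm]

lemma integrable_gd : Integrable (gaussianDensity 1) := by
  simpa using integrable_of_gaussianReal (integrable_const (1 : ℝ))

lemma integral_gd : ∫ x, gaussianDensity 1 x = 1 := by
  simpa using integral_mul_gd fun _ => 1

lemma integrable_mul_gd : Integrable (fun x => x * gaussianDensity 1 x) :=
  integrable_of_gaussianReal ((memLp_id_gaussianReal 1).integrable le_rfl)

lemma integral_id_mul_gd : ∫ x, x * gaussianDensity 1 x = 0 := by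
  rw [integral_mul_gd fun x => x, integral_id_gaussianReal]

lemma integrable_sq_mul_gd : Integrable (fun x => x ^ 2 * gaussianDensity 1 x) :=
  integrable_of_gaussianReal (memLp_id_gaussianReal 2).integrable_sq

lemma integral_sq_mul_gd : ∫ x, x ^ 2 * gaussianDensity 1 x = 1 := by
  rw [integral_mul_gd fun x => x ^ 2]
  have h := variance_of_integral_eq_zero (μ := gaussianReal 0 1) (X := fun x => x)
    aemeasurable_id' integral_id_gaussianReal
  rw [variance_fun_id_gaussianReal] at h
  simpa using h.symm

/-- Completing the square: as a function of `s`, the integrand of `φ₁ ⋆ φ₁` at `w` is `φ₂(w)` times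
the density of `N(w / 2, 1 / 2)`. -/
lemma gd_mul_gd (w s : ℝ) : gaussianDensity 1 s * gaussianDensity 1 (w - s) =
    gaussianDensity 2 w * gaussianPDFReal (w / 2) (1 / 2) s := by
  unfold gaussianDensity gaussianPDFReal
  have h1 : Real.sqrt (2 * Real.pi * 1) * Real.sqrt (2 * Real.pi * 1) =
      Real.sqrt (2 * Real.pi * 2) * Real.sqrt (2 * Real.pi * ((1 / 2 : NNReal) : ℝ)) := by
    rw [← Real.sqrt_mul (by positivity), ← Real.sqrt_mul (by positivity)]
    congr 1; push_cast; ring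
  have h2 : Real.exp (-(s ^ 2) / (2 * 1)) * Real.exp (-((w - s) ^ 2) / (2 * 1)) =
      Real.exp (-(w ^ 2) / (2 * 2)) *
        Real.exp (-(s - w / 2) ^ 2 / (2 * ((1 / 2 : NNReal) : ℝ))) := by
    rw [← Real.exp_add, ← Real.exp_add]
    congr 1; push_cast; ring
  rw [mul_mul_mul_comm, ← mul_inv, h1, h2, mul_inv, mul_mul_mul_comm]

lemma integral_gd_mul_gd (w : ℝ) :
    ∫ s, gaussianDensity 1 s * gaussianDensity 1 (w - s) = gaussianDensity 2 w := by
  simp_rw [gd_mul_gd, integral_const_mul]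
  rw [integral_gaussianPDFReal_eq_one _ (by norm_num), mul_one]

lemma log_gd {v : ℝ} (hv : 0 < v) (x : ℝ) :
    Real.log (gaussianDensity v x) = -(Real.log (2 * Real.pi * v)) / 2 - x ^ 2 / (2 * v) := by
  unfold gaussianDensity
  rw [Real.log_mul (by positivity) (Real.exp_ne_zero _), Real.log_exp, Real.log_inv,
    Real.log_sqrt (by positivity)]
  ring

lemma log_gd_sub_log_gd (a b : ℝ) :
    Real.log (gaussianDensity 1 a) - Real.log (gaussianDensity 2 b) =
      Real.log 2 / 2 - a ^ 2 / 2 + b ^ 2 / 4 := by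
  rw [log_gd one_pos, log_gd two_pos, Real.log_mul (x := 2 * Real.pi) (y := 2) (by positivity)
    (by norm_num), mul_one]
  ring

/-! ### Translation mixtures -/

/-- The translation mixture `f ⋆ ν`, that is, `x ↦ ∫ f (x - t) dν(t)`. -/
noncomputable def mix (ν : Measure ℝ) (f : ℝ → ℝ) (x : ℝ) : ℝ := ∫ t, f (x - t) ∂ν

section
variable {ν : Measure ℝ} [IsProbabilityMeasure ν]

lemma integrable_shift {f : ℝ → ℝ} (hf : Continuous f) {C : ℝ} (hC : ∀ x, ‖f x‖ ≤ C) (x : ℝ) :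
    Integrable (fun t => f (x - t)) ν :=
  Integrable.of_bound (by fun_prop) C (Filter.Eventually.of_forall fun t => hC _)

lemma measurable_mix {f : ℝ → ℝ} (hf : Continuous f) : Measurable (mix ν f) := by
  have : StronglyMeasurable (fun z : ℝ × ℝ => f (z.1 - z.2)) :=
    (by fun_prop : Continuous (fun z : ℝ × ℝ => f (z.1 - z.2))).stronglyMeasurable
  exact this.integral_prod_right'.measurable

lemma integrable_shift_prod {f : ℝ → ℝ} (hf : Continuous f) (hi : Integrable f) :
    Integrable (fun z : ℝ × ℝ => f (z.1 - z.2)) ((volume : Measure ℝ).prod ν) := by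
  rw [integrable_prod_iff' (by
    exact (by fun_prop : Continuous (fun z : ℝ × ℝ => f (z.1 - z.2))).aestronglyMeasurable)]
  refine ⟨Filter.Eventually.of_forall fun t => hi.comp_sub_right t, ?_⟩
  have h : ∀ t : ℝ, ∫ x, ‖f (x - t)‖ = ∫ x, ‖f x‖ := fun t =>
    integral_sub_right_eq_self (fun x => ‖f x‖) t
  simp only [h]
  exact integrable_const _

lemma integrable_mix {f : ℝ → ℝ} (hf : Continuous f) (hi : Integrable f) :
    Integrable (mix ν f) :=
  (integrable_shift_prod hf hi).integral_prod_left

lemma integral_mix {f : ℝ → ℝ} (hf : Continuous f) (hi : Integrable f) :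
    ∫ x, mix ν f x = ∫ x, f x := by
  unfold mix
  rw [integral_integral_swap (f := fun x t => f (x - t)) (integrable_shift_prod hf hi)]
  simp [integral_sub_right_eq_self]

lemma mix_gd_pos {v : ℝ} (hv : 0 < v) (x : ℝ) : 0 < mix ν (gaussianDensity v) x := by
  unfold mix
  rw [integral_pos_iff_support_of_nonneg (fun t => (gd_pos hv _).le)
    (integrable_shift (gd_cont v) (gd_bound hv) x)]
  have : Function.support (fun t => gaussianDensity v (x - t)) = Set.univ :=
    Set.eq_univ_of_forall fun t => (gd_pos hv _).ne'
  simp [this]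

/-- `(ν ⋆ φ₁) ⋆ φ₁ = ν ⋆ φ₂`. -/
lemma integral_mix_mul_gd (y : ℝ) :
    ∫ s, mix ν (gaussianDensity 1) s * gaussianDensity 1 (y - s) =
      mix ν (gaussianDensity 2) y := by
  have hc := gd_cont 1
  have hi : Integrable (fun z : ℝ × ℝ => gaussianDensity 1 (z.1 - z.2) * gaussianDensity 1 (y - z.1))
      ((volume : Measure ℝ).prod ν) :=
    (integrable_shift_prod hc integrable_gd).mul_bdd
      (c := (Real.sqrt (2 * Real.pi * 1))⁻¹) (by
        exact (by fun_prop : Continuous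
          (fun z : ℝ × ℝ => gaussianDensity 1 (y - z.1))).aestronglyMeasurable)
      (Filter.Eventually.of_forall fun z => gd_bound one_pos _)
  unfold mix
  simp_rw [← integral_mul_const]
  rw [integral_integral_swap
    (f := fun s t => gaussianDensity 1 (s - t) * gaussianDensity 1 (y - s)) hi]
  refine integral_congr_ae (Filter.Eventually.of_forall fun t => ?_)
  simp only
  rw [← integral_gd_mul_gd (y - t),
    ← integral_sub_right_eq_self (fun s => gaussianDensity 1 s * gaussianDensity 1 (y - t - s)) t]
  refine integral_congr_ae (Filter.Eventually.of_forall fun s => ?_)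
  simp only
  congr 2
  ring

/-! ### The log-sum inequality and its averages -/

lemma integrable_comb {μ : Measure ℝ} {f g h : ℝ → ℝ} (hf : Integrable f μ)
    (hg : Integrable g μ) (hh : Integrable h μ) (a b c : ℝ) :
    Integrable (fun x => f x * a + g x * b + h x * c) μ :=
  ((hf.mul_const a).add (hg.mul_const b)).add (hh.mul_const c)

lemma integral_comb {μ : Measure ℝ} {f g h : ℝ → ℝ} (hf : Integrable f μ)
    (hg : Integrable g μ) (hh : Integrable h μ) (a b c : ℝ) :
    ∫ x, (f x * a + g x * b + h x * c) ∂μ =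
      (∫ x, f x ∂μ) * a + (∫ x, g x ∂μ) * b + (∫ x, h x ∂μ) * c := by
  have h1 : Integrable (fun x => f x * a + g x * b) μ := (hf.mul_const a).add (hg.mul_const b)
  rw [integral_add h1 (hh.mul_const c), integral_add (hf.mul_const a) (hg.mul_const b),
    integral_mul_const, integral_mul_const, integral_mul_const]

/-- Tangent-line form of the log-sum inequality. -/
lemma log_sum_tangent {u v p q : ℝ} (hu : 0 < u) (hv : 0 < v) (hp : 0 < p) (hq : 0 < q) :
    u * (Real.log p - Real.log q) + u - p / q * v ≤ u * (Real.log u - Real.log v) := by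
  have h := Real.log_le_sub_one_of_pos (x := p / q * v / u) (by positivity)
  rw [Real.log_div (by positivity) hu.ne', Real.log_mul (by positivity) hv.ne',
    Real.log_div hp.ne' hq.ne'] at h
  have h2 := mul_le_mul_of_nonneg_left h hu.le
  have h3 : u * (p / q * v / u - 1) = p / q * v - u := by field_simp
  nlinarith

/-- The log-sum inequality for the mixtures `ν ⋆ φ₁` at `s` and `ν ⋆ φ₂` at `y`, with the
relative-entropy integrand on the right expanded in powers of `s - t`. -/
lemma mix_log_sum (s y : ℝ) :
    mix ν (gaussianDensity 1) s * (Real.log (mix ν (gaussianDensity 1) s) -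
      Real.log (mix ν (gaussianDensity 2) y)) ≤
    mix ν (gaussianDensity 1) s * (Real.log 2 / 2 + (y - s) ^ 2 / 4) +
      mix ν (fun a => a * gaussianDensity 1 a) s * ((y - s) / 2) -
      mix ν (fun a => a ^ 2 * gaussianDensity 1 a) s / 4 := by
  set p := mix ν (gaussianDensity 1) s with hp
  set q := mix ν (gaussianDensity 2) y with hq
  have hp0 : 0 < p := mix_gd_pos one_pos s
  have hq0 : 0 < q := mix_gd_pos two_pos y
  have i0 := integrable_shift (ν := ν) (gd_cont 1) (gd_bound one_pos) s
  have i0' := integrable_shift (ν := ν) (gd_cont 2) (gd_bound two_pos) y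
  have i1 : Integrable (fun t => (s - t) * gaussianDensity 1 (s - t)) ν :=
    integrable_shift (continuous_id'.mul (gd_cont 1)) mul_gd_bound s
  have i2 : Integrable (fun t => (s - t) ^ 2 * gaussianDensity 1 (s - t)) ν :=
    integrable_shift ((continuous_pow 2).mul (gd_cont 1)) sq_mul_gd_bound s
  have hL : ∫ t, (gaussianDensity 1 (s - t) * (Real.log p - Real.log q) +
      gaussianDensity 1 (s - t) * 1 + gaussianDensity 2 (y - t) * -(p / q)) ∂ν =
      p * (Real.log p - Real.log q) := by
    rw [integral_comb i0 i0 i0']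
    change p * _ + p * 1 + q * -(p / q) = _
    field_simp
    ring
  have hR : ∫ t, (gaussianDensity 1 (s - t) * (Real.log 2 / 2 + (y - s) ^ 2 / 4) +
      (s - t) * gaussianDensity 1 (s - t) * ((y - s) / 2) +
      (s - t) ^ 2 * gaussianDensity 1 (s - t) * (-1 / 4)) ∂ν =
      p * (Real.log 2 / 2 + (y - s) ^ 2 / 4) +
      mix ν (fun a => a * gaussianDensity 1 a) s * ((y - s) / 2) -
      mix ν (fun a => a ^ 2 * gaussianDensity 1 a) s / 4 := by
    rw [integral_comb i0 i1 i2]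
    simp only [hp, mix]
    ring
  rw [← hL, ← hR]
  refine integral_mono (integrable_comb i0 i0 i0' _ _ _)
    (integrable_comb i0 i1 i2 _ _ _) fun t => ?_
  have h := log_sum_tangent (gd_pos one_pos (s - t)) (gd_pos two_pos (y - t)) hp0 hq0
  rw [log_gd_sub_log_gd] at h
  simp only
  linear_combination h

/-- `mix_log_sum` averaged over `y ~ N(s, 1)`. -/
lemma mix_log_sum_averaged (s : ℝ)
    (hi : Integrable fun y => mix ν (gaussianDensity 1) s * gaussianDensity 1 (y - s) *
      Real.log (mix ν (gaussianDensity 2) y)) :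
    mix ν (gaussianDensity 1) s * Real.log (mix ν (gaussianDensity 1) s) -
      ∫ y, mix ν (gaussianDensity 1) s * gaussianDensity 1 (y - s) *
        Real.log (mix ν (gaussianDensity 2) y) ≤
    mix ν (gaussianDensity 1) s * (Real.log 2 / 2 + 1 / 4) -
      mix ν (fun a => a ^ 2 * gaussianDensity 1 a) s / 4 := by
  set p := mix ν (gaussianDensity 1) s
  set m₁ := mix ν (fun a => a * gaussianDensity 1 a) s
  set m₂ := mix ν (fun a => a ^ 2 * gaussianDensity 1 a) s
  have j0 := integrable_gd.comp_sub_right s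
  have j1 := integrable_mul_gd.comp_sub_right s
  have j2 := integrable_sq_mul_gd.comp_sub_right s
  have k0 : ∫ y, gaussianDensity 1 (y - s) = 1 := by
    rw [integral_sub_right_eq_self (gaussianDensity 1) s, integral_gd]
  have k1 : ∫ y, (y - s) * gaussianDensity 1 (y - s) = 0 := by
    rw [integral_sub_right_eq_self (fun x => x * gaussianDensity 1 x) s, integral_id_mul_gd]
  have k2 : ∫ y, (y - s) ^ 2 * gaussianDensity 1 (y - s) = 1 := by
    rw [integral_sub_right_eq_self (fun x => x ^ 2 * gaussianDensity 1 x) s, integral_sq_mul_gd]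
  have hL : ∫ y, (gaussianDensity 1 (y - s) * (p * Real.log p) -
      p * gaussianDensity 1 (y - s) * Real.log (mix ν (gaussianDensity 2) y)) =
      p * Real.log p -
        ∫ y, p * gaussianDensity 1 (y - s) * Real.log (mix ν (gaussianDensity 2) y) := by
    rw [integral_sub (j0.mul_const _) hi, integral_mul_const, k0, one_mul]
  have hR : ∫ y, (gaussianDensity 1 (y - s) * (p * (Real.log 2 / 2) - m₂ / 4) +
      (y - s) ^ 2 * gaussianDensity 1 (y - s) * (p / 4) +
      (y - s) * gaussianDensity 1 (y - s) * (m₁ / 2)) =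
      p * (Real.log 2 / 2 + 1 / 4) - m₂ / 4 := by
    rw [integral_comb j0 j2 j1, k0, k1, k2]
    ring
  rw [← hL, ← hR]
  refine integral_mono ((j0.mul_const _).sub hi)
    (integrable_comb j0 j2 j1 _ _ _) fun y => ?_
  have h := mul_le_mul_of_nonneg_left (mix_log_sum (ν := ν) s y) (gd_pos one_pos (y - s)).le
  simp only
  linear_combination h

/-! ### The cross term -/

/-- The cross term `p₁(s) φ₁(y - s) log p₂(y)` is jointly integrable because its absolute value
integrates over `s` to `p₂(y) |log p₂(y)|`. -/
lemma integrable_cross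
    (h₂ : Integrable fun x => mix ν (gaussianDensity 2) x *
      Real.log (mix ν (gaussianDensity 2) x)) :
    Integrable (fun z : ℝ × ℝ => mix ν (gaussianDensity 1) z.1 * gaussianDensity 1 (z.2 - z.1) *
      Real.log (mix ν (gaussianDensity 2) z.2)) ((volume : Measure ℝ).prod volume) := by
  have hm1 := measurable_mix (ν := ν) (gd_cont 1)
  have hm2 := measurable_mix (ν := ν) (gd_cont 2)
  have hg := (gd_cont 1).measurable
  rw [integrable_prod_iff' (by
    exact (by fun_prop : Measurable (fun z : ℝ × ℝ => mix ν (gaussianDensity 1) z.1 *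
      gaussianDensity 1 (z.2 - z.1) *
      Real.log (mix ν (gaussianDensity 2) z.2))).aestronglyMeasurable)]
  constructor
  · refine Filter.Eventually.of_forall fun y => ?_
    have h : Integrable fun s => mix ν (gaussianDensity 1) s * gaussianDensity 1 (y - s) :=
      (integrable_mix (gd_cont 1) integrable_gd).mul_bdd
        (c := (Real.sqrt (2 * Real.pi * 1))⁻¹) (by
          exact (by fun_prop : Measurable
            (fun s => gaussianDensity 1 (y - s))).aestronglyMeasurable)
        (Filter.Eventually.of_forall fun z => gd_bound one_pos _)
    exact h.mul_const (Real.log (mix ν (gaussianDensity 2) y))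
  · refine h₂.norm.congr (Filter.Eventually.of_forall fun y => ?_)
    have h : ∀ s, ‖mix ν (gaussianDensity 1) s * gaussianDensity 1 (y - s) *
        Real.log (mix ν (gaussianDensity 2) y)‖ =
        mix ν (gaussianDensity 1) s * gaussianDensity 1 (y - s) *
          ‖Real.log (mix ν (gaussianDensity 2) y)‖ := fun s => by
      rw [norm_mul, Real.norm_of_nonneg
        (mul_pos (mix_gd_pos one_pos s) (gd_pos one_pos (y - s))).le]
    simp only [h]
    rw [integral_mul_const, integral_mix_mul_gd, norm_mul,
      Real.norm_of_nonneg (mix_gd_pos two_pos y).le]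

lemma integral_cross
    (h₂ : Integrable fun x => mix ν (gaussianDensity 2) x *
      Real.log (mix ν (gaussianDensity 2) x)) :
    ∫ s, ∫ y, mix ν (gaussianDensity 1) s * gaussianDensity 1 (y - s) *
      Real.log (mix ν (gaussianDensity 2) y) =
    ∫ y, mix ν (gaussianDensity 2) y * Real.log (mix ν (gaussianDensity 2) y) := by
  rw [integral_integral_swap (f := fun s y => mix ν (gaussianDensity 1) s *
    gaussianDensity 1 (y - s) * Real.log (mix ν (gaussianDensity 2) y)) (integrable_cross h₂)]
  simp_rw [integral_mul_const, integral_mix_mul_gd]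

/-- The entropy bound for the noise law `ν`, which need not have a density. -/
lemma mix_entropy_bound
    (h₂ : Integrable fun x => mix ν (gaussianDensity 2) x *
      Real.log (mix ν (gaussianDensity 2) x))
    (h₁ : Integrable fun x => mix ν (gaussianDensity 1) x *
      Real.log (mix ν (gaussianDensity 1) x)) :
    (∫ x, mix ν (gaussianDensity 1) x * Real.log (mix ν (gaussianDensity 1) x)) -
      (∫ x, mix ν (gaussianDensity 2) x * Real.log (mix ν (gaussianDensity 2) x)) ≤
      Real.log 2 / 2 := by
  have hX := integrable_cross h₂
  have hc2 : Continuous fun a => a ^ 2 * gaussianDensity 1 a := (continuous_pow 2).mul (gd_cont 1)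
  have n0 := integrable_mix (ν := ν) (gd_cont 1) integrable_gd
  have n2 := integrable_mix (ν := ν) hc2 integrable_sq_mul_gd
  have hR : ∫ s, (mix ν (gaussianDensity 1) s * (Real.log 2 / 2 + 1 / 4) -
      mix ν (fun a => a ^ 2 * gaussianDensity 1 a) s / 4) = Real.log 2 / 2 := by
    rw [integral_sub (n0.mul_const _) (n2.div_const _), integral_mul_const, integral_div,
      integral_mix (gd_cont 1) integrable_gd, integral_mix hc2 integrable_sq_mul_gd,
      integral_gd, integral_sq_mul_gd]
    ring
  rw [← integral_cross h₂, ← integral_sub h₁ hX.integral_prod_left, ← hR]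
  refine integral_mono_ae (h₁.sub hX.integral_prod_left) ((n0.mul_const _).sub (n2.div_const _)) ?_
  filter_upwards [hX.prod_right_ae] with s hs
  exact mix_log_sum_averaged s hs

end

/-! ### Noise with a density -/

lemma conv_eq_mix {g : ℝ → ℝ} (hmeas : Measurable g) (hnn : ∀ᵐ x : ℝ, 0 ≤ g x) (f : ℝ → ℝ) :
    conv g f = mix (volume.withDensity fun x => ENNReal.ofReal (g x)) f := by
  funext x
  unfold conv mix
  rw [integral_withDensity_eq_integral_toReal_smul hmeas.ennreal_ofReal
    (Filter.Eventually.of_forall fun _ => ENNReal.ofReal_lt_top)]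
  refine integral_congr_ae ?_
  filter_upwards [hnn] with t ht
  simp [ENNReal.toReal_ofReal ht]

/-- upper bound in the paper's interference example: for any
probability density `g` (the density of the noise `Z̃`), the mutual information
`I(X̃; Ỹ) = h(g ⋆ φ₂) − h(g ⋆ φ₁)` is at most `(1/2)·log 2`. -/
theorem stmt_12 (g : ℝ → ℝ)
    (hmeas : Measurable g) (hnn : ∀ᵐ x : ℝ, 0 ≤ g x) (hint : ∫ x : ℝ, g x = 1)
    (hlog₂ : Integrable (fun x : ℝ =>
      conv g (gaussianDensity 2) x * Real.log (conv g (gaussianDensity 2) x)))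
    (hlog₁ : Integrable (fun x : ℝ =>
      conv g (gaussianDensity 1) x * Real.log (conv g (gaussianDensity 1) x))) :
    (-∫ x : ℝ, conv g (gaussianDensity 2) x * Real.log (conv g (gaussianDensity 2) x)) -
      (-∫ x : ℝ, conv g (gaussianDensity 1) x * Real.log (conv g (gaussianDensity 1) x)) ≤
      (1 / 2) * Real.log 2 := by
  have hi : Integrable g := by
    by_contra h
    rw [integral_undef h] at hint
    exact zero_ne_one hint
  have : IsProbabilityMeasure (volume.withDensity fun x => ENNReal.ofReal (g x)) := by
    refine ⟨?_⟩
    rw [withDensity_apply _ MeasurableSet.univ, Measure.restrict_univ,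
      ← ofReal_integral_eq_lintegral_ofReal hi hnn, hint, ENNReal.ofReal_one]
  simp only [conv_eq_mix hmeas hnn] at hlog₁ hlog₂ ⊢
  linarith [mix_entropy_bound hlog₂ hlog₁]
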